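/- Assume A is finitely generated, projective, and faithfully flat as an R-module. Then: (i) S_A is a finitely generated projective module over the polynomial ring R[X]; (ii) the quotient of S_A by the ideal generated by X − 1 is isomorphic as an R-algebra to A, via the evaluation-at-1 homomorphism; (iii) the quotient of S_A by the ideal generated by X is isomorphic as an R-algebra to TrivSqZeroExt R (A ⧸ Submodule.span R {(1 : A)}). -/

import Mathlib

/-!
The map `R[X] × A[X] → S_A`, `(r, q) ↦ r + X q`, is surjective with kernel the antidiagonal copy
`q ↦ (-X q, q)` of `R[X]`. So `S_A` is finitely generated when `A` is, and it is projective when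
`A` is projective and `R[X] → A[X]` has a linear retraction. Such a retraction exists because
`A[X]` is projective and faithfully flat over `R[X]`: the values at `1` of the linear functionals
form an ideal `I` with `1 ∈ I A[X]`, and faithful flatness turns `I A[X] = A[X]` into `I = R[X]`.

Every element of `S_A` is `r + X q`. Since `X · X A[X] ⊆ X S_A`, modulo `X` the products of
elements of `X A[X]` vanish and only `r` and the class of `q(0)` modulo `R · 1` survive.
-/

section Retraction

variable (R : Type*) [CommRing R]

theorem mem_range_dualEval_smul_top {M : Type*} [AddCommGroup M] [Module R M]
    [Module.Projective R M] (m : M) :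
    m ∈ (LinearMap.range (Module.Dual.eval R M m) : Ideal R) • (⊤ : Submodule R M) := by
  obtain ⟨s, hs⟩ := Module.projective_def'.1 ‹Module.Projective R M›
  have sum_eq : (s m).sum (fun x r ↦ r • x) = m := LinearMap.congr_fun hs m
  nth_rw 2 [← sum_eq]
  exact Submodule.sum_mem _ fun x _ ↦
    Submodule.smul_mem_smul ⟨Finsupp.lapply x ∘ₗ s, rfl⟩ Submodule.mem_top

theorem exists_linearMap_apply_one_eq_one (A : Type*) [CommRing A] [Algebra R A]
    [Module.Projective R A] [Module.FaithfullyFlat R A] : ∃ φ : A →ₗ[R] R, φ 1 = 1 := by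
  let I : Ideal R := LinearMap.range (Module.Dual.eval R A 1)
  suffices I = ⊤ from (Ideal.eq_top_iff_one I).1 this
  refine ((Module.FaithfullyFlat.iff_flat_and_ideal_smul_eq_top R A).1 inferInstance).2 I ?_
  have one_mem : (1 : A) ∈ I • (⊤ : Submodule R A) := mem_range_dualEval_smul_top R 1
  rw [Ideal.smul_top_eq_map] at one_mem ⊢
  rw [(Ideal.eq_top_iff_one _).2 one_mem, Submodule.restrictScalars_top]

end Retraction

open Polynomial

section UnitReesAlgebra

attribute [local instance] Polynomial.algebra

variable (R A : Type*) [CommRing R] [CommRing A] [Algebra R A]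

/-- The Rees algebra `S_A` of the two-step filtration `R · 1 ⊆ A`, realized inside `A[X]` as the
polynomials whose constant coefficient comes from `R`. It is encoded as an `R[X]`-subalgebra, from
which the `R`-algebra structure is obtained by restriction of scalars. -/
noncomputable def unitReesAlgebra : Subalgebra R[X] A[X] where
  toSubsemiring := (algebraMap R A).rangeS.comap constantCoeff
  algebraMap_mem' p := ⟨p.coeff 0, by simp⟩

namespace unitReesAlgebra

/-- Multiplication by `X` as a map `A[X] → S_A`; its image is the ideal `X A[X]` of `S_A`, which
contains the ideal generated by `X`. -/
noncomputable def mulX : A[X] →ₗ[R[X]] unitReesAlgebra R A :=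
  (LinearMap.mulLeft R[X] (X : A[X])).codRestrict (unitReesAlgebra R A).toSubmodule
    fun q ↦ ⟨0, by simp⟩

variable {R A}

theorem mem_iff {p : A[X]} : p ∈ unitReesAlgebra R A ↔ p.coeff 0 ∈ (algebraMap R A).range :=
  Iff.rfl

@[simp]
theorem coe_mulX (q : A[X]) : (mulX R A q : A[X]) = X * q :=
  rfl

theorem algebraMap_X_mul (p : unitReesAlgebra R A) :
    algebraMap R[X] (unitReesAlgebra R A) X * p = mulX R A p :=
  Subtype.ext (by simp)

theorem mulX_mul_mulX (p q : A[X]) :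
    mulX R A p * mulX R A q = algebraMap R[X] (unitReesAlgebra R A) X * mulX R A (p * q) :=
  Subtype.ext (by simp [mul_assoc, mul_left_comm])

theorem exists_eq_algebraMap_add_mulX (p : unitReesAlgebra R A) :
    ∃ (r : R) (q : A[X]), p = algebraMap R (unitReesAlgebra R A) r + mulX R A q := by
  obtain ⟨r, hr⟩ := mem_iff.1 p.2
  refine ⟨r, (p : A[X]).divX, Subtype.ext ?_⟩
  simp [hr, X_mul_divX_add, add_comm]

theorem mem_of_X_sub_one_mul_mem {q : A[X]} (h : (X - 1) * q ∈ unitReesAlgebra R A) :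
    q ∈ unitReesAlgebra R A := by
  rw [mem_iff] at h ⊢
  simpa [mul_coeff_zero] using neg_mem h

theorem mem_span_X_iff {p : unitReesAlgebra R A} :
    p ∈ Ideal.span {algebraMap R[X] (unitReesAlgebra R A) X} ↔
      ∃ q ∈ unitReesAlgebra R A, p = mulX R A q := by
  rw [Ideal.mem_span_singleton]
  exact ⟨fun ⟨q, hq⟩ ↦ ⟨q, q.2, hq.trans (algebraMap_X_mul q)⟩,
    fun ⟨q, hq, h⟩ ↦ ⟨⟨q, hq⟩, h.trans (algebraMap_X_mul ⟨q, hq⟩).symm⟩⟩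

theorem mk_mulX_C_coeff_zero (q : A[X]) :
    (Ideal.Quotient.mk (Ideal.span {algebraMap R[X] (unitReesAlgebra R A) X})
      (mulX R A (C (q.coeff 0)))) = Ideal.Quotient.mk _ (mulX R A q) := by
  rw [eq_comm, Ideal.Quotient.mk_eq_mk_iff_sub_mem, ← map_sub, mem_span_X_iff]
  exact ⟨q - C (q.coeff 0), ⟨0, by simp⟩, rfl⟩

variable (R A)

/-- The presentation `(r, q) ↦ r + X q` of `S_A` as an `R[X]`-module. -/
noncomputable def ofProd : R[X] × A[X] →ₗ[R[X]] unitReesAlgebra R A :=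
  (Algebra.linearMap R[X] (unitReesAlgebra R A)).coprod (mulX R A)

theorem ofProd_surjective : Function.Surjective (ofProd R A) := fun p ↦
  let ⟨r, q, h⟩ := exists_eq_algebraMap_add_mulX p
  ⟨(C r, q), Subtype.ext (by simp [ofProd, h])⟩

/-- The map `q ↦ (-X q, q)`, which parametrizes the relations in the presentation `ofProd`. -/
noncomputable def relation : R[X] →ₗ[R[X]] R[X] × A[X] :=
  (-LinearMap.mulLeft R[X] X).prod (Algebra.linearMap R[X] A[X])

theorem exact_relation_ofProd [FaithfulSMul R A] :
    Function.Exact (relation R A) (ofProd R A) := by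
  rintro ⟨r, q⟩
  constructor
  · intro h
    have h_sum : r.map (algebraMap R A) + X * q = 0 := congr_arg Subtype.val h
    have coeff_zero : algebraMap R A (r.coeff 0) = 0 := by
      simpa using congr_arg (coeff · 0) h_sum
    obtain ⟨t, rfl⟩ := X_dvd_iff.2 ((FaithfulSMul.algebraMap_eq_zero_iff R A).1 coeff_zero)
    have hq : t.map (algebraMap R A) + q = 0 := by
      apply isRegular_X.left
      simpa [mul_add] using h_sum
    exact ⟨-t, by simp [relation, eq_neg_of_add_eq_zero_right hq]⟩
  · rintro ⟨t, h⟩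
    obtain ⟨rfl, rfl⟩ := Prod.ext_iff.1 h
    exact Subtype.ext (by simp [ofProd, relation])

instance [Module.Finite R A] : Module.Finite R[X] (unitReesAlgebra R A) :=
  have : Module.Finite R[X] A[X] :=
    .equiv (inferInstance : Algebra.IsPushout R R[X] A A[X]).out.equiv
  .of_surjective (ofProd R A) (ofProd_surjective R A)

instance [Module.Projective R A] [Module.FaithfullyFlat R A] :
    Module.Projective R[X] (unitReesAlgebra R A) := by
  let e := (inferInstance : Algebra.IsPushout R R[X] A A[X]).out.equiv
  have : Module.Projective R[X] A[X] := .of_equiv e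
  have : Module.FaithfullyFlat R[X] A[X] := .of_linearEquiv _ _ e.symm
  obtain ⟨φ, hφ⟩ := exists_linearMap_apply_one_eq_one R[X] A[X]
  have retraction : (φ ∘ₗ LinearMap.snd R[X] R[X] A[X]) ∘ₗ relation R A = LinearMap.id := by
    ext1
    simp [relation, hφ]
  have retraction_iff_section := (exact_relation_ofProd R A).split_tfae'.out 1 0
  obtain ⟨-, i, hi⟩ := retraction_iff_section.1 ⟨ofProd_surjective R A, _, retraction⟩
  exact .of_split i (ofProd R A) hi

/-- Evaluation at `1` on `S_A`, whose kernel is generated by `X - 1`. -/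
noncomputable def evalOne : unitReesAlgebra R A →ₐ[R] A :=
  ((aeval (1 : A)).restrictScalars R).comp ((unitReesAlgebra R A).val.restrictScalars R)

theorem evalOne_apply (p : unitReesAlgebra R A) : evalOne R A p = eval 1 (p : A[X]) := by
  simp [evalOne, coe_aeval_eq_eval]

theorem evalOne_surjective : Function.Surjective (evalOne R A) := fun a ↦
  ⟨mulX R A (C a), by simp [evalOne_apply]⟩

theorem ker_evalOne :
    RingHom.ker (evalOne R A) = Ideal.span {algebraMap R[X] (unitReesAlgebra R A) X - 1} := by
  refine le_antisymm (fun p hp ↦ ?_) ?_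
  · rw [RingHom.mem_ker, evalOne_apply] at hp
    obtain ⟨q, hq⟩ := dvd_iff_isRoot.2 hp
    rw [C_1] at hq
    have hqS : q ∈ unitReesAlgebra R A := mem_of_X_sub_one_mul_mem (hq ▸ p.2)
    exact Ideal.mem_span_singleton.2 ⟨⟨q, hqS⟩, Subtype.ext (by simpa using hq)⟩
  · rw [Ideal.span_singleton_le_iff_mem, RingHom.mem_ker, evalOne_apply]
    simp

/-- The specialization of `S_A` at `X = 1`. -/
noncomputable def quotientXSubOneEquiv :
    (unitReesAlgebra R A ⧸ Ideal.span {algebraMap R[X] (unitReesAlgebra R A) X - 1}) ≃ₐ[R] A :=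
  (Ideal.quotientEquivAlgOfEq R (ker_evalOne R A).symm).trans
    (Ideal.quotientKerAlgEquivOfSurjective (evalOne_surjective R A))

theorem quotientXSubOneEquiv_mk (p : unitReesAlgebra R A) :
    quotientXSubOneEquiv R A (Ideal.Quotient.mk _ p) = eval 1 (p : A[X]) :=
  evalOne_apply R A p

/-- The special fibre `S_A ⧸ (X)`. -/
abbrev QuotientX : Type _ :=
  unitReesAlgebra R A ⧸ Ideal.span {algebraMap R[X] (unitReesAlgebra R A) X}

/-- The degree-one part `A ⧸ R · 1 → S_A ⧸ (X)` of the special fibre, sending the class of `a` to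
the class of `a X`. -/
noncomputable def degreeOne : (A ⧸ Submodule.span R {(1 : A)}) →ₗ[R] QuotientX R A :=
  (Submodule.span R {(1 : A)}).liftQ
    ((Ideal.Quotient.mkₐ R _).toLinearMap ∘ₗ (mulX R A).restrictScalars R ∘ₗ
      (CAlgHom (R := R) (A := A)).toLinearMap) <| by
    rw [Submodule.span_singleton_le_iff_mem, LinearMap.mem_ker]
    exact Ideal.Quotient.eq_zero_iff_mem.2 (mem_span_X_iff.2 ⟨1, one_mem _, by simp⟩)

theorem degreeOne_mk (a : A) :
    degreeOne R A (Submodule.Quotient.mk a) = Ideal.Quotient.mk _ (mulX R A (C a)) :=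
  rfl

theorem degreeOne_mul_degreeOne (x y : A ⧸ Submodule.span R {(1 : A)}) :
    degreeOne R A x * degreeOne R A y = 0 := by
  obtain ⟨a, rfl⟩ := Submodule.Quotient.mk_surjective _ x
  obtain ⟨b, rfl⟩ := Submodule.Quotient.mk_surjective _ y
  rw [degreeOne_mk, degreeOne_mk, ← map_mul, mulX_mul_mulX, Ideal.Quotient.eq_zero_iff_mem]
  exact Ideal.mul_mem_right _ _ (Ideal.mem_span_singleton_self _)

variable [Module Rᵐᵒᵖ (A ⧸ Submodule.span R {(1 : A)})]
  [IsCentralScalar R (A ⧸ Submodule.span R {(1 : A)})]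

/-- The comparison map from the trivial square-zero extension to the special fibre of `S_A`. -/
noncomputable def ofTrivSqZeroExt :
    TrivSqZeroExt R (A ⧸ Submodule.span R {(1 : A)}) →ₐ[R] QuotientX R A :=
  TrivSqZeroExt.liftEquivOfComm ⟨degreeOne R A, degreeOne_mul_degreeOne R A⟩

theorem ofTrivSqZeroExt_apply (r : R) (a : A) :
    ofTrivSqZeroExt R A (TrivSqZeroExt.inl r + TrivSqZeroExt.inr (Submodule.Quotient.mk a)) =
      Ideal.Quotient.mk _ (algebraMap R (unitReesAlgebra R A) r + mulX R A (C a)) := by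
  rw [map_add, map_add, ← degreeOne_mk]
  congr 1
  · exact (ofTrivSqZeroExt R A).commutes r
  · simp [ofTrivSqZeroExt]

theorem ofTrivSqZeroExt_surjective : Function.Surjective (ofTrivSqZeroExt R A) := by
  intro z
  obtain ⟨p, rfl⟩ := Ideal.Quotient.mk_surjective z
  obtain ⟨r, q, rfl⟩ := exists_eq_algebraMap_add_mulX p
  refine ⟨.inl r + .inr (Submodule.Quotient.mk (q.coeff 0)), ?_⟩
  rw [ofTrivSqZeroExt_apply, map_add, map_add, mk_mulX_C_coeff_zero]

theorem ofTrivSqZeroExt_injective [FaithfulSMul R A] :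
    Function.Injective (ofTrivSqZeroExt R A) := by
  rw [injective_iff_map_eq_zero]
  intro z hz
  induction z with | inl_add_inr r m
  obtain ⟨a, rfl⟩ := Submodule.Quotient.mk_surjective _ m
  rw [ofTrivSqZeroExt_apply, Ideal.Quotient.eq_zero_iff_mem, mem_span_X_iff] at hz
  obtain ⟨q, hq, h⟩ := hz
  have h_eq : C (algebraMap R A r) + X * C a = X * q := by
    simpa using congr_arg Subtype.val h
  have hr : r = 0 := by
    simpa using congr_arg (coeff · 0) h_eq
  have ha : a = q.coeff 0 := by
    simpa [coeff_C] using congr_arg (coeff · 1) h_eq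
  have hm : (Submodule.Quotient.mk a : A ⧸ Submodule.span R {(1 : A)}) = 0 := by
    rw [Submodule.Quotient.mk_eq_zero, Submodule.mem_span_singleton, ha]
    simpa [Algebra.algebraMap_eq_smul_one] using mem_iff.1 hq
  rw [hr, hm, TrivSqZeroExt.inl_zero, TrivSqZeroExt.inr_zero, add_zero]

/-- The special fibre of `S_A` is a trivial square-zero extension. -/
noncomputable def quotientXEquiv [FaithfulSMul R A] :
    QuotientX R A ≃ₐ[R] TrivSqZeroExt R (A ⧸ Submodule.span R {(1 : A)}) :=
  (AlgEquiv.ofBijective (ofTrivSqZeroExt R A)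
    ⟨ofTrivSqZeroExt_injective R A, ofTrivSqZeroExt_surjective R A⟩).symm

end unitReesAlgebra

end UnitReesAlgebra

theorem stmt3_general (R A : Type*) [CommRing R] [CommRing A] [Algebra R A]
    [Module.Projective R A] [Module.FaithfullyFlat R A]
    [Module Rᵐᵒᵖ (A ⧸ Submodule.span R {(1 : A)})]
    [IsCentralScalar R (A ⧸ Submodule.span R {(1 : A)})] :
    (letI : Algebra R[X] A[X] := (Polynomial.mapRingHom (algebraMap R A)).toAlgebra
     ∀ T : Subalgebra R[X] A[X],
      (T : Set A[X]) = {p : A[X] | p.coeff 0 ∈ (algebraMap R A).range} →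
      Module.Projective R[X] T ∧ (Module.Finite R A → Module.Finite R[X] T)) ∧
    ∀ S : Subalgebra R A[X],
      (S : Set A[X]) = {p : A[X] | p.coeff 0 ∈ (algebraMap R A).range} →
      ∀ x : S, (x : A[X]) = X →
        (∃ e : (S ⧸ Ideal.span {x - 1}) ≃ₐ[R] A,
          ∀ p : S, e (Ideal.Quotient.mk (Ideal.span {x - 1}) p) = eval 1 (p : A[X])) ∧
        Nonempty ((S ⧸ Ideal.span {x}) ≃ₐ[R]
          TrivSqZeroExt R (A ⧸ Submodule.span R {(1 : A)})) := by
  refine ⟨fun T hT ↦ ?_, fun S hS x hx ↦ ?_⟩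
  · obtain rfl : T = unitReesAlgebra R A := SetLike.coe_injective hT
    exact ⟨inferInstance, fun _ ↦ inferInstance⟩
  · let : Algebra R[X] A[X] := Polynomial.algebra R A
    obtain rfl : S = (unitReesAlgebra R A).restrictScalars R := SetLike.coe_injective hS
    obtain rfl : x = algebraMap R[X] (unitReesAlgebra R A) X := Subtype.ext (by simpa using hx)
    exact ⟨⟨unitReesAlgebra.quotientXSubOneEquiv R A, unitReesAlgebra.quotientXSubOneEquiv_mk R A⟩,
      ⟨unitReesAlgebra.quotientXEquiv R A⟩⟩

/-- Let `A` be a commutative `R`-algebra that is finitely generated, projective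
and faithfully flat as an `R`-module. Let `S_A ⊆ A[X]` be the subalgebra of polynomials whose
constant coefficient lies in the image of `R`. Then:
(i) `S_A` is a finitely generated projective `R[X]`-module (via the coefficient-wise map
`R[X] → A[X]`);
(ii) `S_A ⧸ (X - 1)` is isomorphic to `A` as an `R`-algebra via evaluation at `1`;
(iii) `S_A ⧸ (X)` is isomorphic as an `R`-algebra to the trivial square-zero extension
`TrivSqZeroExt R (A ⧸ R·1)`. -/
theorem stmt3 (R A : Type*) [CommRing R] [CommRing A] [Algebra R A]
    [Module.Finite R A] [Module.Projective R A] [Module.FaithfullyFlat R A]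
    [Module Rᵐᵒᵖ (A ⧸ Submodule.span R {(1 : A)})]
    [IsCentralScalar R (A ⧸ Submodule.span R {(1 : A)})] :
    (letI : Algebra (Polynomial R) (Polynomial A) :=
      (Polynomial.mapRingHom (algebraMap R A)).toAlgebra
     ∀ T : Subalgebra (Polynomial R) (Polynomial A),
      (T : Set (Polynomial A)) =
        {p : Polynomial A | p.coeff 0 ∈ (algebraMap R A).range} →
      Module.Finite (Polynomial R) T ∧ Module.Projective (Polynomial R) T) ∧
    ∀ S : Subalgebra R (Polynomial A),
      (S : Set (Polynomial A)) =
        {p : Polynomial A | p.coeff 0 ∈ (algebraMap R A).range} →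
      ∀ x : S, (x : Polynomial A) = Polynomial.X →
        (∃ e : (S ⧸ Ideal.span {x - 1}) ≃ₐ[R] A,
          ∀ p : S, e (Ideal.Quotient.mk (Ideal.span {x - 1}) p) =
            Polynomial.eval 1 (p : Polynomial A)) ∧
        Nonempty ((S ⧸ Ideal.span {x}) ≃ₐ[R]
          TrivSqZeroExt R (A ⧸ Submodule.span R {(1 : A)})) := by
  obtain ⟨h, h_quotient⟩ := stmt3_general R A
  exact ⟨fun T hT ↦ ⟨(h T hT).2 inferInstance, (h T hT).1⟩, h_quotient⟩
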